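/- Double-sum reduction for the stabilizer Rényi quantity: for every natural number n, every integer α ≥ 1, and every unit vector ψ : (Fin n → Fin 2) → ℂ, one has d⁻⁴ · Σ over all pairs s, t : Fin n → Fin 4 of ‖⟨ψ, (P_s * P_t) ψ⟩‖^(2α) = d⁻¹ · A_α(ψ), where ‖·‖ denotes the complex absolute value, ⟨ψ, M ψ⟩ = star ψ ⬝ᵥ M.mulVec ψ, and d = 2^n. -/

import Mathlib

open Complex Matrix BigOperators

/-- The single-qubit Pauli matrices `Q₀ = 1`, `Q₁ = X`, `Q₂ = Y`, `Q₃ = Z`. -/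
noncomputable def Q : Fin 4 → Matrix (Fin 2) (Fin 2) ℂ :=
  ![1, !![0, 1; 1, 0], !![0, -Complex.I; Complex.I, 0], !![1, 0; 0, -1]]

/-- The `n`-qubit Pauli string `P_s`, the Kronecker product of the `Q (s k)`. -/
noncomputable def P {n : ℕ} (s : Fin n → Fin 4) :
    Matrix (Fin n → Fin 2) (Fin n → Fin 2) ℂ :=
  Matrix.of fun i j => ∏ k, Q (s k) (i k) (j k)


/-- `A_α(ψ) = d⁻¹ ∑_s ⟨ψ, P_s ψ⟩^(2α)` with `d = 2^n`. -/
noncomputable def A (n α : ℕ) (ψ : (Fin n → Fin 2) → ℂ) : ℝ :=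
  (2 ^ n : ℝ)⁻¹ * ∑ s : Fin n → Fin 4, (star ψ ⬝ᵥ (P s).mulVec ψ).re ^ (2 * α)

/-!
Up to a phase of modulus one, `P s * P t` is the Pauli string indexed by `s + t` in the Klein
four-group `(ℤ/2)²`, taken qubit by qubit. For fixed `s` this index runs once through all strings
as `t` does, so each of the `4 ^ n = d ^ 2` inner sums equals `∑ t, ‖⟨ψ, P t ψ⟩‖ ^ (2 * α)`. Since
`P t` is Hermitian, `⟨ψ, P t ψ⟩` is real and this sum is `d * A_α(ψ)`.
-/

section PiKronecker

variable {ι R : Type*} [Fintype ι] {l m n : ι → Type*}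

/-- The Kronecker product of a finite family of matrices, with rows and columns indexed by
dependent functions instead of iterated pairs. It makes `P s` the product of the `Q (s k)`. -/
def piKronecker [CommMonoid R] (M : ∀ k, Matrix (m k) (n k) R) :
    Matrix (∀ k, m k) (∀ k, n k) R :=
  of fun i j => ∏ k, M k (i k) (j k)

theorem piKronecker_mul_piKronecker [CommSemiring R] [DecidableEq ι] [∀ k, Fintype (m k)]
    (M : ∀ k, Matrix (l k) (m k) R) (N : ∀ k, Matrix (m k) (n k) R) :
    piKronecker M * piKronecker N = piKronecker fun k => M k * N k := by
  ext i j
  simp only [piKronecker, mul_apply, of_apply, ← Finset.prod_mul_distrib, Fintype.prod_sum]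

theorem piKronecker_smul [CommMonoid R] (c : ι → R) (M : ∀ k, Matrix (m k) (n k) R) :
    piKronecker (fun k => c k • M k) = (∏ k, c k) • piKronecker M := by
  ext i j
  simp only [piKronecker, of_apply, Matrix.smul_apply, smul_eq_mul, Finset.prod_mul_distrib]

theorem conjTranspose_piKronecker [CommMonoid R] [StarMul R]
    (M : ∀ k, Matrix (m k) (n k) R) :
    (piKronecker M)ᴴ = piKronecker fun k => (M k)ᴴ := by
  ext i j
  simp only [piKronecker, conjTranspose_apply, of_apply, star_prod]

theorem isHermitian_piKronecker [CommMonoid R] [StarMul R] {M : ∀ k, Matrix (n k) (n k) R}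
    (hM : ∀ k, (M k).IsHermitian) : (piKronecker M).IsHermitian := by
  rw [IsHermitian, conjTranspose_piKronecker]
  exact congrArg piKronecker (funext hM)

end PiKronecker

theorem norm_star_dotProduct_mulVec_of_isHermitian {m 𝕜 : Type*} [Fintype m] [RCLike 𝕜]
    {M : Matrix m m 𝕜} (hM : M.IsHermitian) (ψ : m → 𝕜) :
    ‖star ψ ⬝ᵥ M *ᵥ ψ‖ = |RCLike.re (star ψ ⬝ᵥ M *ᵥ ψ)| := by
  have coe_re : (RCLike.re (star ψ ⬝ᵥ M *ᵥ ψ) : 𝕜) = star ψ ⬝ᵥ M *ᵥ ψ :=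
    RCLike.conj_eq_iff_re.1 (RCLike.conj_eq_iff_im.2 (hM.im_star_dotProduct_mulVec_self ψ))
  rw [← RCLike.norm_ofReal (K := 𝕜), coe_re]

/-- The phase `c` in `Q a * Q b = c • Q (a ^^^ b)`. For distinct `a, b ≠ 0` it is `I` or `-I`,
according as `(a, b)` follows the cyclic order `X → Y → Z → X` or reverses it. -/
noncomputable def pauliPhase : Fin 4 → Fin 4 → ℂ :=
  ![![1, 1, 1, 1], ![1, 1, I, -I], ![1, -I, 1, I], ![1, I, -I, 1]]

theorem norm_pauliPhase (a b : Fin 4) : ‖pauliPhase a b‖ = 1 := by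
  fin_cases a <;> fin_cases b <;> simp [pauliPhase]

-- Bitwise xor on `Fin 4` is the Klein four-group law of the Pauli matrices modulo phases.
theorem Q_mul_Q (a b : Fin 4) : Q a * Q b = pauliPhase a b • Q (a ^^^ b) := by
  ext i j
  fin_cases a <;> fin_cases b <;> fin_cases i <;> fin_cases j <;>
    simp [Q, pauliPhase, mul_apply]

theorem isHermitian_Q (a : Fin 4) : (Q a).IsHermitian := by
  ext i j
  fin_cases a <;> fin_cases i <;> fin_cases j <;> simp [Q]

theorem xor_xor_cancel_left_fin_four (a b : Fin 4) : a ^^^ (a ^^^ b) = b := by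
  revert a b
  decide

section PauliString

variable {n : ℕ}

theorem P_eq_piKronecker (s : Fin n → Fin 4) : P s = piKronecker fun k => Q (s k) :=
  rfl

theorem isHermitian_P (s : Fin n → Fin 4) : (P s).IsHermitian :=
  isHermitian_piKronecker fun k => isHermitian_Q (s k)

theorem P_mul_P (s t : Fin n → Fin 4) :
    P s * P t = (∏ k, pauliPhase (s k) (t k)) • P fun k => s k ^^^ t k := by
  simp only [P_eq_piKronecker, piKronecker_mul_piKronecker, Q_mul_Q, piKronecker_smul]

theorem sum_P_mul_P {β : Type*} [AddCommMonoid β]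
    (F : Matrix (Fin n → Fin 2) (Fin n → Fin 2) ℂ → β)
    (hF : ∀ (c : ℂ) M, ‖c‖ = 1 → F (c • M) = F M) (s : Fin n → Fin 4) :
    ∑ t, F (P s * P t) = ∑ t, F (P t) := by
  have xor_involutive : Function.Involutive fun (t : Fin n → Fin 4) k => s k ^^^ t k :=
    fun t => funext fun k => xor_xor_cancel_left_fin_four (s k) (t k)
  have norm_phase (t : Fin n → Fin 4) : ‖∏ k, pauliPhase (s k) (t k)‖ = 1 := by
    simp only [norm_prod, norm_pauliPhase, Finset.prod_const_one]
  calc ∑ t, F (P s * P t)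
      = ∑ t : Fin n → Fin 4, F (P fun k => s k ^^^ t k) :=
        Finset.sum_congr rfl fun t _ => by rw [P_mul_P, hF _ _ (norm_phase t)]
    _ = ∑ t, F (P t) := xor_involutive.bijective.sum_comp fun t => F (P t)

theorem sum_norm_pow_P_mul_P (p : ℕ) (s : Fin n → Fin 4) (φ ψ : (Fin n → Fin 2) → ℂ) :
    ∑ t, ‖φ ⬝ᵥ (P s * P t) *ᵥ ψ‖ ^ p = ∑ t, ‖φ ⬝ᵥ P t *ᵥ ψ‖ ^ p :=
  sum_P_mul_P (fun M => ‖φ ⬝ᵥ M *ᵥ ψ‖ ^ p)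
    (fun c M hc => by simp only [smul_mulVec, dotProduct_smul, norm_smul, hc, one_mul]) s

theorem norm_star_dotProduct_P_mulVec_pow (α : ℕ) (s : Fin n → Fin 4) (ψ : (Fin n → Fin 2) → ℂ) :
    ‖star ψ ⬝ᵥ P s *ᵥ ψ‖ ^ (2 * α) = (star ψ ⬝ᵥ P s *ᵥ ψ).re ^ (2 * α) := by
  rw [norm_star_dotProduct_mulVec_of_isHermitian (isHermitian_P s), (even_two_mul α).pow_abs,
    RCLike.re_eq_complex_re]

end PauliString

theorem double_sum_reduction_general (n α : ℕ) (ψ : (Fin n → Fin 2) → ℂ) :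
    ((2 ^ n : ℝ) ^ 4)⁻¹ * ∑ s : Fin n → Fin 4, ∑ t : Fin n → Fin 4,
        ‖star ψ ⬝ᵥ (P s * P t).mulVec ψ‖ ^ (2 * α)
      = (2 ^ n : ℝ)⁻¹ * A n α ψ := by
  have card_strings : (Fintype.card (Fin n → Fin 4) : ℝ) = (2 ^ n) ^ 2 := by
    rw [Fintype.card_fun, Fintype.card_fin, Fintype.card_fin, pow_right_comm]
    norm_num
  simp only [sum_norm_pow_P_mul_P, norm_star_dotProduct_P_mulVec_pow, Finset.sum_const,
    Finset.card_univ, nsmul_eq_mul, card_strings, A]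
  field_simp

theorem double_sum_reduction (n α : ℕ) (hα : 1 ≤ α) (ψ : (Fin n → Fin 2) → ℂ)
    (hψ : star ψ ⬝ᵥ ψ = 1) :
    ((2 ^ n : ℝ) ^ 4)⁻¹ * ∑ s : Fin n → Fin 4, ∑ t : Fin n → Fin 4,
        ‖star ψ ⬝ᵥ (P s * P t).mulVec ψ‖ ^ (2 * α)
      = (2 ^ n : ℝ)⁻¹ * A n α ψ :=
  double_sum_reduction_general n α ψ
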